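/- arXiv:2011.05006 — 2 statements merged into one kernel-verified Lean document; each statement's English description precedes it below -/
import Mathlib

section
/- For all real numbers q, z with 0 < q < 1 and z > 0, one has 2·S_odd(q,1)·Σ_{ℓ∈ℤ} q^{(ℓ+1)²} z^{2ℓ+1} = Π_{i≥1} (1 + q^{i}z + q^{2i}z²)(1 + q^{i−1}z⁻¹ + q^{2(i−1)}z⁻²) − Π_{i≥1} (1 − q^{i}z + q^{2i}z²)(1 − q^{i−1}z⁻¹ + q^{2(i−1)}z⁻²), where the sum over ℓ and the infinite products converge absolutely. -/
/-!
Write `F(z) = ∏_{i ≥ 1} (1 + q^i z + q^{2i} z²)(1 + q^{i-1} z⁻¹ + q^{2(i-1)} z⁻²)`. The right-hand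
side is `F(z) - F(-z)`, twice the odd part of the Laurent series `F(z) = ∑ c_k z^k`. The relation
`F(z) = q² z² F(qz)` gives `c_k = q^k c_{k-2}` (`limCoef_rec`), hence
`c_{2ℓ+1} = q^{(ℓ+1)²} c_{-1}` (`limCoef_odd`), and what remains is `c_{-1} = S_odd(q, 1)`
(`Sodd_eq`).

For the Laurent series, the product with `n` factors on each side is, up to a monomial, a rescaling
of `∏_{s < 2n} (1 + q^s y + q^{2s} y²)`, whose coefficients are `coef`. The coefficients of the
truncations are non-negative and increase with `n`; they converge to `limCoef`, and dominated
convergence gives the expansion of `F` (`hasSum_limCoef`).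

For the last identity, `coef q m k` counts configurations of `k` particles on the sites
`0, …, m - 1`, at most two per site, weighted by `q` to the sum of their positions
(`exists_finset_config`). List the positions in decreasing order, with all lower sites doubly
occupied: having at most two particles per site means that no two consecutive gaps vanish, so the
gap sequence lies in `Ho`, and Abel summation identifies the sum of the positions with `A'` up to a
constant. As the box grows, the finite sets of gap sequences obtained exhaust `Ho`.
-/

open scoped BigOperators

/-- `He` is the set of sequences `(ω_{-i})_{i ≥ 1}` of non-negative integers (indexed here by
`n : ℕ` with `i = n + 1`) with no two consecutive vanishing entries, agreeing for large `i`
with the sequence which is `1` at even `i` and `0` at odd `i`. -/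
def He : Set (ℕ → ℕ) :=
  {ω | (∀ n : ℕ, ¬(ω n = 0 ∧ ω (n + 1) = 0)) ∧
       (∃ N : ℕ, ∀ n ≥ N, ω n = if (n + 1) % 2 = 0 then 1 else 0)}

/-- `Ho` is as `He`, but agreeing for large `i` with the sequence which is `1` at odd `i`
and `0` at even `i`. -/
def Ho : Set (ℕ → ℕ) :=
  {ω | (∀ n : ℕ, ¬(ω n = 0 ∧ ω (n + 1) = 0)) ∧
       (∃ N : ℕ, ∀ n ≥ N, ω n = if (n + 1) % 2 = 1 then 1 else 0)}

/-- `A(ω) = Σ_{i odd} i·ω_{-i} + Σ_{i even} i·(ω_{-i} − 1)`. -/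
noncomputable def Afun (ω : ℕ → ℕ) : ℤ :=
  ∑ᶠ n : ℕ, (if (n + 1) % 2 = 1 then ((n : ℤ) + 1) * (ω n : ℤ)
             else ((n : ℤ) + 1) * ((ω n : ℤ) - 1))

/-- `B(ω) = 2·(Σ_{i odd} 1{ω_{-i} ≥ 1} − Σ_{i even} 1{ω_{-i} = 0})`. -/
noncomputable def Bfun (ω : ℕ → ℕ) : ℤ :=
  2 * ((∑ᶠ n : ℕ, if (n + 1) % 2 = 1 ∧ 1 ≤ ω n then (1 : ℤ) else 0)
     - (∑ᶠ n : ℕ, if (n + 1) % 2 = 0 ∧ ω n = 0 then (1 : ℤ) else 0))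

/-- `A'(ω) = Σ_{i even} i·ω_{-i} + Σ_{i odd} i·(ω_{-i} − 1)`. -/
noncomputable def A'fun (ω : ℕ → ℕ) : ℤ :=
  ∑ᶠ n : ℕ, (if (n + 1) % 2 = 0 then ((n : ℤ) + 1) * (ω n : ℤ)
             else ((n : ℤ) + 1) * ((ω n : ℤ) - 1))

/-- `B'(ω) = 2·(Σ_{i even} 1{ω_{-i} ≥ 1} − Σ_{i odd} 1{ω_{-i} = 0})`. -/
noncomputable def B'fun (ω : ℕ → ℕ) : ℤ :=
  2 * ((∑ᶠ n : ℕ, if (n + 1) % 2 = 0 ∧ 1 ≤ ω n then (1 : ℤ) else 0)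
     - (∑ᶠ n : ℕ, if (n + 1) % 2 = 1 ∧ ω n = 0 then (1 : ℤ) else 0))

/-- `S_even(q̃, t) = Σ_{ω ∈ H_e} q̃^{A(ω)} t^{B(ω)}`. -/
noncomputable def Seven (q t : ℝ) : ℝ := ∑' ω : He, q ^ Afun ω.1 * t ^ Bfun ω.1

/-- `S_odd(q̃, t) = Σ_{ω ∈ H_o} q̃^{A'(ω)} t^{B'(ω)}`. -/
noncomputable def Sodd (q t : ℝ) : ℝ := ∑' ω : Ho, q ^ A'fun ω.1 * t ^ B'fun ω.1

namespace TrinomialTheta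

open Finset Filter Topology

/-! ### Coefficients of the truncated product -/

/-- The single-site factor `1 + y + y²`. -/
def siteFactor (y : ℝ) : ℝ := 1 + y + y ^ 2

/-- The coefficient of `y ^ k` in `∏_{s < m} (1 + q^s y + q^{2s} y²)`, extended by zero to all
integers `k`. -/
def coef (q : ℝ) : ℕ → ℤ → ℝ
  | 0, k => if k = 0 then 1 else 0
  | m + 1, k => coef q m k + q ^ m * coef q m (k - 1) + q ^ (2 * m) * coef q m (k - 2)

lemma coef_succ (q : ℝ) (m : ℕ) (k : ℤ) : coef q (m + 1) k =
    coef q m k + q ^ m * coef q m (k - 1) + q ^ (2 * m) * coef q m (k - 2) := rfl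

lemma coef_nonneg {q : ℝ} (hq : 0 < q) (m : ℕ) (k : ℤ) : 0 ≤ coef q m k := by
  induction m generalizing k with
  | zero => simp only [coef]; split_ifs <;> norm_num
  | succ m ih =>
    have h0 := ih k
    have h1 := ih (k - 1)
    have h2 := ih (k - 2)
    simp only [coef]
    positivity

lemma coef_neg (q : ℝ) (m : ℕ) {k : ℤ} (hk : k < 0) : coef q m k = 0 := by
  induction m generalizing k with
  | zero => simp [coef, hk.ne]
  | succ m ih =>
    simp [coef, ih hk, ih (show k - 1 < 0 by omega), ih (show k - 2 < 0 by omega)]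

lemma hasSum_coef (q : ℝ) (m : ℕ) {y : ℝ} (hy : y ≠ 0) :
    HasSum (fun k : ℤ => coef q m k * y ^ k) (∏ s ∈ range m, siteFactor (q ^ s * y)) := by
  induction m with
  | zero =>
    have h := hasSum_ite_eq (0 : ℤ) (1 : ℝ)
    rw [range_zero, prod_empty]
    convert h using 2 with k
    simp only [coef]
    split_ifs with hk <;> simp [hk]
  | succ m ih =>
    have h1 := ((Equiv.subRight (1 : ℤ)).hasSum_iff.mpr ih).mul_left (q ^ m * y)
    have h2 := ((Equiv.subRight (2 : ℤ)).hasSum_iff.mpr ih).mul_left (q ^ (2 * m) * y ^ 2)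
    rw [prod_range_succ]
    convert (ih.add h1).add h2 using 1
    · funext k
      simp only [coef, Function.comp, Equiv.subRight_apply, zpow_sub₀ hy]
      norm_cast
      field_simp
    · simp only [siteFactor]
      ring

/-- The product over `s < m + 1` can also be built by adding the factor at `s = 0` to the rescaled
product over `s < m`; comparing with the definition of `coef` gives a `q`-difference equation. -/
lemma coef_succ' {q : ℝ} (hq : 0 < q) (m : ℕ) (k : ℤ) :
    coef q (m + 1) k =
      q ^ k * coef q m k + q ^ (k - 1) * coef q m (k - 1) + q ^ (k - 2) * coef q m (k - 2) := by
  induction m generalizing k with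
  | zero =>
    simp only [coef]
    by_cases h0 : k = 0
    · subst h0; simp
    by_cases h1 : k = 1
    · subst h1; simp
    by_cases h2 : k = 2
    · subst h2; simp
    simp [h0, show k - 1 ≠ 0 by omega, show k - 2 ≠ 0 by omega]
  | succ m ih =>
    rw [coef_succ q (m + 1) k]
    conv_lhs => rw [ih k, ih (k - 1), ih (k - 2)]
    simp only [coef_succ q m]
    have e1 : k - 1 - 2 = k - 3 := by ring
    have e2 : k - 2 - 1 = k - 3 := by ring
    have e3 : k - 1 - 1 = k - 2 := by ring
    have e4 : k - 2 - 2 = k - 4 := by ring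
    rw [e1, e2, e3, e4]
    have z1 : q ^ (k - 1) = q ^ k / q := by rw [zpow_sub₀ hq.ne', zpow_one]
    have z2 : q ^ (k - 2) = q ^ k / q ^ 2 := by rw [zpow_sub₀ hq.ne']; norm_cast
    have z3 : q ^ (k - 3) = q ^ k / q ^ 3 := by rw [zpow_sub₀ hq.ne']; norm_cast
    have z4 : q ^ (k - 4) = q ^ k / q ^ 4 := by rw [zpow_sub₀ hq.ne']; norm_cast
    rw [z1, z2, z3, z4]
    field_simp
    ring

/-- Since `1 + y⁻¹ + y⁻² = y⁻² (1 + y + y²)`, the truncated two-sided product is a monomial times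
a one-sided product of `2n` factors starting at `q ^ (1 - n) * z`. -/
lemma prod_two_sided {q z : ℝ} (hq : 0 < q) (hz : z ≠ 0) (n : ℕ) :
    ∏ i ∈ range n, siteFactor (q ^ (i + 1) * z) * siteFactor (q ^ i * z⁻¹) =
      z ^ (-2 * n : ℤ) * q ^ ((n : ℤ) * (n - 1)) *
        ∏ s ∈ range (2 * n), siteFactor (q ^ s * (q ^ (1 - n : ℤ) * z)) := by
  induction n with
  | zero => simp
  | succ n ih =>
    rw [prod_range_succ, ih, show 2 * (n + 1) = 2 * n + 1 + 1 by ring, prod_range_succ',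
      prod_range_succ]
    have hs : ∀ s : ℕ, q ^ (s + 1) * (q ^ (1 - (n + 1 : ℕ) : ℤ) * z) =
        q ^ s * (q ^ (1 - n : ℤ) * z) := by
      intro s
      rw [show (1 - (n : ℤ)) = (1 - (n + 1 : ℕ) : ℤ) + 1 by push_cast; ring, zpow_add₀ hq.ne' _ 1, zpow_one]
      ring
    simp only [hs]
    have h1 : q ^ (2 * n) * (q ^ (1 - n : ℤ) * z) = q ^ (n + 1) * z := by
      rw [← mul_assoc, ← zpow_natCast, ← zpow_natCast, ← zpow_add₀ hq.ne']
      congr 2; push_cast; ring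
    have h2 : z ^ (-2 * (n + 1 : ℕ) : ℤ) = z ^ (-2 * n : ℤ) * (z ^ 2)⁻¹ := by
      rw [show (-2 * (n + 1 : ℕ) : ℤ) = -2 * n - 2 by push_cast; ring, zpow_sub₀ hz]
      norm_cast
    have h3 : q ^ (((n + 1 : ℕ) : ℤ) * ((n + 1 : ℕ) - 1)) =
        q ^ ((n : ℤ) * (n - 1)) * (q ^ n) ^ 2 := by
      rw [← pow_mul, ← zpow_natCast, ← zpow_add₀ hq.ne']
      congr 1; push_cast; ring
    have h4 : q ^ (1 - (n + 1 : ℕ) : ℤ) = (q ^ n)⁻¹ := by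
      rw [show (1 - (n + 1 : ℕ) : ℤ) = -(n : ℤ) by push_cast; ring, zpow_neg, zpow_natCast]
    rw [h1, h2, h3, h4]
    have h5 : siteFactor (q ^ 0 * ((q ^ n)⁻¹ * z)) * (q ^ n) ^ 2 * (z ^ 2)⁻¹ =
        siteFactor (q ^ n * z⁻¹) := by
      have := pow_pos hq n
      simp only [siteFactor]
      field_simp
      ring
    rw [← h5]
    ring

/-- The coefficient of `z ^ k` in the two-sided product truncated to `p + 1` factors on each
side. -/
noncomputable def laurent (q : ℝ) (p : ℕ) (k : ℤ) : ℝ :=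
  q ^ (-(p : ℤ) * (p + 1 + k)) * coef q (2 * p + 2) (k + 2 * p + 2)

lemma laurent_nonneg {q : ℝ} (hq : 0 < q) (p : ℕ) (k : ℤ) : 0 ≤ laurent q p k :=
  mul_nonneg (zpow_pos hq _).le (coef_nonneg hq _ _)

lemma hasSum_laurent {q z : ℝ} (hq : 0 < q) (hz : z ≠ 0) (p : ℕ) :
    HasSum (fun k : ℤ => laurent q p k * z ^ k)
      (∏ i ∈ range (p + 1), siteFactor (q ^ (i + 1) * z) * siteFactor (q ^ i * z⁻¹)) := by
  rw [prod_two_sided hq hz]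
  have hy : q ^ (1 - (p + 1 : ℕ) : ℤ) * z ≠ 0 := mul_ne_zero (zpow_pos hq _).ne' hz
  have h := (Equiv.addRight (2 * p + 2 : ℤ)).hasSum_iff.mpr (hasSum_coef q (2 * (p + 1)) hy)
  have h' := h.mul_left (z ^ (-2 * (p + 1 : ℕ) : ℤ) * q ^ (((p + 1 : ℕ) : ℤ) * ((p + 1 : ℕ) - 1)))
  convert h' using 1
  · rfl
  funext k
  simp only [Function.comp, Equiv.coe_addRight, laurent]
  rw [mul_zpow, ← zpow_mul, show k + (2 * p + 2 : ℤ) = k + 2 * p + 2 by ring,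
    show 2 * (p + 1) = 2 * p + 2 by ring]
  have h1 : q ^ (-(p : ℤ) * (p + 1 + k)) = q ^ (((p + 1 : ℕ) : ℤ) * ((p + 1 : ℕ) - 1)) *
      q ^ ((1 - (p + 1 : ℕ) : ℤ) * (k + 2 * p + 2)) := by
    rw [← zpow_add₀ hq.ne']; congr 1; push_cast; ring
  have h2 : z ^ k = z ^ (-2 * (p + 1 : ℕ) : ℤ) * z ^ (k + 2 * p + 2) := by
    rw [← zpow_add₀ hz]; congr 1; push_cast; ring
  rw [h1, h2]
  ring

lemma laurent_mono {q : ℝ} (hq : 0 < q) (k : ℤ) : Monotone fun p => laurent q p k := by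
  refine monotone_nat_of_le_succ fun p => ?_
  simp only [laurent]
  have h1 : coef q (2 * p + 3) (k + 2 * p + 4) ≤ coef q (2 * (p + 1) + 2) (k + 2 * p + 4) := by
    rw [show 2 * (p + 1) + 2 = (2 * p + 3) + 1 by ring, coef_succ q (2 * p + 3)]
    have := coef_nonneg hq (2 * p + 3) (k + 2 * p + 4 - 1)
    have := coef_nonneg hq (2 * p + 3) (k + 2 * p + 4 - 2)
    have : 0 ≤ q ^ (2 * p + 3) * coef q (2 * p + 3) (k + 2 * p + 4 - 1) := by positivity
    have : 0 ≤ q ^ (2 * (2 * p + 3)) * coef q (2 * p + 3) (k + 2 * p + 4 - 2) := by positivity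
    linarith
  have h2 : q ^ (k + 2 * p + 2) * coef q (2 * p + 2) (k + 2 * p + 2) ≤
      coef q (2 * p + 3) (k + 2 * p + 4) := by
    rw [coef_succ' hq (2 * p + 2) (k + 2 * p + 4)]
    have e : k + 2 * p + 4 - 2 = k + 2 * p + 2 := by ring
    have := mul_nonneg (zpow_pos hq (k + 2 * p + 4)).le
      (coef_nonneg hq (2 * p + 2) (k + 2 * p + 4))
    have := mul_nonneg (zpow_pos hq (k + 2 * p + 4 - 1)).le
      (coef_nonneg hq (2 * p + 2) (k + 2 * p + 4 - 1))
    rw [e]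
    linarith
  calc q ^ (-(p : ℤ) * (p + 1 + k)) * coef q (2 * p + 2) (k + 2 * p + 2)
      = q ^ (-((p + 1 : ℕ) : ℤ) * ((p + 1 : ℕ) + 1 + k)) *
          (q ^ (k + 2 * p + 2) * coef q (2 * p + 2) (k + 2 * p + 2)) := by
        rw [← mul_assoc, ← zpow_add₀ hq.ne']; congr 2; push_cast; ring
    _ ≤ _ := by
        refine mul_le_mul_of_nonneg_left ?_ (zpow_pos hq _).le
        convert h2.trans h1 using 2
        push_cast; ring

/-- Truncated form of the relation `c_k = q ^ k c_{k-2}`. -/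
lemma laurent_rec {q : ℝ} (hq : 0 < q) (p : ℕ) (k : ℤ) :
    q ^ k * q ^ (2 * (p + 1)) * laurent q p k + q ^ k * q ^ (p + 1) * laurent q p (k - 1)
        + q ^ k * laurent q p (k - 2) =
      laurent q p k + q ^ (p + 2) * laurent q p (k - 1)
        + q ^ (2 * (p + 2)) * laurent q p (k - 2) := by
  have h := coef_succ' hq (2 * p + 2) (k + 2 * p + 2)
  rw [coef] at h
  simp only [laurent]
  have e1 : k - 1 + 2 * p + 2 = k + 2 * p + 2 - 1 := by ring
  have e2 : k - 2 + 2 * p + 2 = k + 2 * p + 2 - 2 := by ring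
  have z1 : q ^ (-(p : ℤ) * (p + 1 + (k - 1))) = q ^ (-(p : ℤ) * (p + 1 + k)) * q ^ p := by
    rw [← zpow_natCast, ← zpow_add₀ hq.ne']; congr 1; ring
  have z2 : q ^ (-(p : ℤ) * (p + 1 + (k - 2))) = q ^ (-(p : ℤ) * (p + 1 + k)) * q ^ (2 * p) := by
    rw [← zpow_natCast, ← zpow_add₀ hq.ne']; congr 1; push_cast; ring
  have z3 : q ^ (k + 2 * p + 2) = q ^ k * q ^ (2 * p + 2) := by
    rw [← zpow_natCast, ← zpow_add₀ hq.ne']; congr 1; push_cast; ring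
  have z4 : q ^ (k + 2 * p + 2 - 1) = q ^ k * q ^ (2 * p + 1) := by
    rw [← zpow_natCast, ← zpow_add₀ hq.ne']; congr 1; push_cast; ring
  have z5 : q ^ (k + 2 * p + 2 - 2) = q ^ k * q ^ (2 * p) := by
    rw [← zpow_natCast, ← zpow_add₀ hq.ne']; congr 1; push_cast; ring
  rw [e1, e2, z1, z2]
  rw [z3, z4, z5] at h
  linear_combination (-q ^ (-(p : ℤ) * (p + 1 + k))) * h

/-! ### The Laurent expansion of the infinite product -/

lemma multipliable_two_sided {q : ℝ} (hq : 0 < q) (hq1 : q < 1) (z : ℝ) :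
    Multipliable fun i : ℕ => siteFactor (q ^ (i + 1) * z) * siteFactor (q ^ i * z⁻¹) := by
  have key : ∀ w : ℝ, Multipliable fun i : ℕ => siteFactor (q ^ i * w) := by
    intro w
    have h1 := (summable_geometric_of_lt_one hq.le hq1).mul_right w
    have h2 := (summable_geometric_of_lt_one (sq_nonneg q)
      (pow_lt_one₀ hq.le hq1 two_ne_zero)).mul_right (w ^ 2)
    refine (Real.multipliable_one_add_of_summable (h1.add h2)).congr fun i => ?_
    simp only [siteFactor]
    ring
  refine ((key (q * z)).mul (key z⁻¹)).congr fun i => ?_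
  rw [pow_succ, mul_assoc]

/-- The coefficient of `z ^ k` in the infinite two-sided product, as the increasing limit of the
coefficients of its truncations. -/
noncomputable def limCoef (q : ℝ) (k : ℤ) : ℝ := ⨆ p, laurent q p k

lemma exists_sum_laurent_le {q z : ℝ} (hq : 0 < q) (hq1 : q < 1) (hz : 0 < z) :
    ∃ B, ∀ (u : Finset ℤ) (p : ℕ), ∑ k ∈ u, laurent q p k * z ^ k ≤ B := by
  obtain ⟨B, hB⟩ := (multipliable_two_sided hq hq1 z).tendsto_prod_tprod_nat.bddAbove_range
  refine ⟨B, fun u p => ?_⟩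
  refine (sum_le_hasSum u (fun k _ => ?_) (hasSum_laurent hq hz.ne' p)).trans (hB ⟨p + 1, rfl⟩)
  exact mul_nonneg (laurent_nonneg hq _ _) (zpow_pos hz _).le

lemma tendsto_laurent {q : ℝ} (hq : 0 < q) (hq1 : q < 1) (k : ℤ) :
    Tendsto (fun p => laurent q p k) atTop (𝓝 (limCoef q k)) := by
  obtain ⟨B, hB⟩ := exists_sum_laurent_le hq hq1 one_pos
  refine tendsto_atTop_ciSup (laurent_mono hq k) ⟨B, ?_⟩
  rintro _ ⟨p, rfl⟩
  simpa using hB {k} p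

lemma laurent_le_limCoef {q : ℝ} (hq : 0 < q) (hq1 : q < 1) (p : ℕ) (k : ℤ) :
    laurent q p k ≤ limCoef q k :=
  (laurent_mono hq k).ge_of_tendsto (tendsto_laurent hq hq1 k) p

lemma limCoef_nonneg {q : ℝ} (hq : 0 < q) (hq1 : q < 1) (k : ℤ) : 0 ≤ limCoef q k :=
  (laurent_nonneg hq 0 k).trans (laurent_le_limCoef hq hq1 0 k)

lemma summable_limCoef {q z : ℝ} (hq : 0 < q) (hq1 : q < 1) (hz : 0 < z) :
    Summable fun k : ℤ => limCoef q k * z ^ k := by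
  obtain ⟨B, hB⟩ := exists_sum_laurent_le hq hq1 hz
  refine summable_of_sum_le (c := B)
    (fun k => mul_nonneg (limCoef_nonneg hq hq1 k) (zpow_pos hz _).le) fun u => ?_
  refine le_of_tendsto (tendsto_finsetSum u fun k _ =>
    (tendsto_laurent hq hq1 k).mul_const (z ^ k)) (Eventually.of_forall fun p => hB u p)

/-- Laurent expansion of the two-sided infinite product, at nonzero real `z` of either sign. -/
lemma hasSum_limCoef {q z : ℝ} (hq : 0 < q) (hq1 : q < 1) (hz : z ≠ 0) :
    HasSum (fun k : ℤ => limCoef q k * z ^ k)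
      (∏' i : ℕ, siteFactor (q ^ (i + 1) * z) * siteFactor (q ^ i * z⁻¹)) := by
  have habs := summable_limCoef hq hq1 (abs_pos.mpr hz)
  have hs : Summable fun k : ℤ => limCoef q k * z ^ k := by
    refine Summable.of_norm (habs.congr fun k => ?_)
    rw [norm_mul, norm_zpow, Real.norm_of_nonneg (limCoef_nonneg hq hq1 k), Real.norm_eq_abs]
  have h1 : Tendsto (fun p => ∑' k : ℤ, laurent q p k * z ^ k) atTop
      (𝓝 (∑' k : ℤ, limCoef q k * z ^ k)) := by
    refine tendsto_tsum_of_dominated_convergence habs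
      (fun k => (tendsto_laurent hq hq1 k).mul_const _) (Eventually.of_forall fun p k => ?_)
    rw [norm_mul, norm_zpow, Real.norm_of_nonneg (laurent_nonneg hq p k), Real.norm_eq_abs]
    exact mul_le_mul_of_nonneg_right (laurent_le_limCoef hq hq1 p k)
      (zpow_nonneg (abs_nonneg z) k)
  have h2 := (multipliable_two_sided hq hq1 z).tendsto_prod_tprod_nat.comp (tendsto_add_atTop_nat 1)
  have h3 : (fun p => ∑' k : ℤ, laurent q p k * z ^ k) = (fun n => ∏ i ∈ range n,
      siteFactor (q ^ (i + 1) * z) * siteFactor (q ^ i * z⁻¹)) ∘ fun p => p + 1 :=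
    funext fun p => (hasSum_laurent hq hz p).tsum_eq
  rw [h3] at h1
  rw [← tendsto_nhds_unique h1 h2]
  exact hs.hasSum

lemma limCoef_rec {q : ℝ} (hq : 0 < q) (hq1 : q < 1) (k : ℤ) :
    limCoef q k = q ^ k * limCoef q (k - 2) := by
  have h0 := tendsto_laurent hq hq1 k
  have h1 := tendsto_laurent hq hq1 (k - 1)
  have h2 := tendsto_laurent hq hq1 (k - 2)
  have hpow := tendsto_pow_atTop_nhds_zero_of_lt_one hq.le hq1
  have q1 : Tendsto (fun p : ℕ => q ^ (p + 1)) atTop (𝓝 0) :=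
    hpow.comp (tendsto_add_atTop_nat 1)
  have q2 : Tendsto (fun p : ℕ => q ^ (p + 2)) atTop (𝓝 0) :=
    hpow.comp (tendsto_add_atTop_nat 2)
  have q3 : Tendsto (fun p : ℕ => q ^ (2 * (p + 1))) atTop (𝓝 0) := by
    simpa [← pow_mul, mul_comm] using q1.pow 2
  have q4 : Tendsto (fun p : ℕ => q ^ (2 * (p + 2))) atTop (𝓝 0) := by
    simpa [← pow_mul, mul_comm] using q2.pow 2
  have hL := (((q3.const_mul (q ^ k)).mul h0).add ((q1.const_mul (q ^ k)).mul h1)).add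
    (h2.const_mul (q ^ k))
  have hR := (h0.add (q2.mul h1)).add (q4.mul h2)
  have h := tendsto_nhds_unique (hL.congr fun p => laurent_rec hq p k) hR
  linarith

lemma limCoef_odd {q : ℝ} (hq : 0 < q) (hq1 : q < 1) (l : ℤ) :
    limCoef q (2 * l + 1) = q ^ ((l + 1) ^ 2) * limCoef q (-1) := by
  -- The recursion links `l` to `l - 1`, so the induction starts from `l = -1`.
  induction l using Int.inductionOn' (b := -1) with
  | zero => norm_num
  | succ l _ ih =>
    rw [limCoef_rec hq hq1, show 2 * (l + 1) + 1 - 2 = 2 * l + 1 by ring, ih, ← mul_assoc,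
      ← zpow_add₀ hq.ne']
    congr 2; ring
  | pred l _ ih =>
    rw [limCoef_rec hq hq1, show 2 * l + 1 - 2 = 2 * (l - 1) + 1 by ring] at ih
    have : q ^ (2 * l + 1) ≠ 0 := (zpow_pos hq _).ne'
    refine mul_left_cancel₀ this (ih.trans ?_)
    rw [← mul_assoc, ← zpow_add₀ hq.ne']
    congr 2; ring

lemma limCoef_neg_one_pos {q : ℝ} (hq : 0 < q) (hq1 : q < 1) : 0 < limCoef q (-1) := by
  refine lt_of_lt_of_le ?_ (laurent_le_limCoef hq hq1 0 (-1))
  norm_num [laurent, coef]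
  positivity

/-! ### Particle configurations with at most two particles per site -/

/-- Positions below the bottom of a box of sites `0, 1, 2, …`, two particles per site, listed
downwards: `-1, -1, -2, -2, …`. -/
def tail (i : ℕ) : ℤ := -1 - (i / 2 : ℕ)

/-- `x` lists in weakly decreasing order the positions of particles, at most two per site, such
that exactly `k` of them lie in the box `{0, …, m - 1}`, none lies above it, and all sites below it
are doubly occupied. -/
def IsConfig (m k : ℕ) (x : ℕ → ℤ) : Prop :=
  (∀ i, x (i + 1) ≤ x i) ∧ (∀ i, x (i + 2) < x i) ∧ (∀ i, x (k + i) = tail i) ∧ x 0 < m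

/-- Add a particle at position `a` in front of the list `x`. -/
def consSeq (a : ℤ) (x : ℕ → ℤ) : ℕ → ℤ
  | 0 => a
  | i + 1 => x i

lemma consSeq_injective (a : ℤ) : Function.Injective (consSeq a) := fun _ _ h =>
  funext fun i => congrFun h (i + 1)

lemma eq_consSeq (x : ℕ → ℤ) : x = consSeq (x 0) fun i => x (i + 1) := by
  funext i; cases i <;> rfl

lemma isConfig_zero_right (m : ℕ) (x : ℕ → ℤ) : IsConfig m 0 x ↔ x = tail := by
  constructor
  · rintro ⟨-, -, h, -⟩
    funext i
    simpa using h i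
  · rintro rfl
    refine ⟨fun i => ?_, fun i => ?_, fun i => by simp, ?_⟩ <;> simp only [tail] <;> omega

/-- A particle inside the box has non-negative position, by the bound on the occupation of the
highest site below the box. -/
lemma IsConfig.nonneg {m k : ℕ} {x : ℕ → ℤ} (h : IsConfig m (k + 1) x) : 0 ≤ x 0 := by
  obtain ⟨h1, h2, h3, -⟩ := h
  have h4 := h2 k
  have h5 := h3 1
  have h6 : x k ≤ x 0 := antitone_nat_of_succ_le h1 (Nat.zero_le k)
  simp only [tail] at h5
  rw [show k + 2 = k + 1 + 1 by ring, h5] at h4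
  omega

lemma not_isConfig_zero (k : ℕ) (x : ℕ → ℤ) : ¬ IsConfig 0 (k + 1) x := fun h => by
  have := h.nonneg
  have := h.2.2.2
  simp at this
  omega

lemma IsConfig.mono {m k : ℕ} {x : ℕ → ℤ} (h : IsConfig m k x) : IsConfig (m + 1) k x :=
  ⟨h.1, h.2.1, h.2.2.1, h.2.2.2.trans (by push_cast; omega)⟩

lemma IsConfig.cons {m k : ℕ} {x : ℕ → ℤ} (h : IsConfig m k x) :
    IsConfig (m + 1) (k + 1) (consSeq m x) := by
  obtain ⟨h1, h2, h3, h4⟩ := h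
  refine ⟨fun i => ?_, fun i => ?_, fun i => ?_, ?_⟩
  · cases i with
    | zero => exact h4.le
    | succ i => exact h1 i
  · cases i with
    | zero => exact (h1 0).trans_lt h4
    | succ i => exact h2 i
  · rw [show k + 1 + i = (k + i) + 1 by ring]; exact h3 i
  · simp [consSeq]

lemma IsConfig.cons_cons {m k : ℕ} {x : ℕ → ℤ} (h : IsConfig m k x) :
    IsConfig (m + 1) (k + 2) (consSeq m (consSeq m x)) := by
  obtain ⟨h1, h2, h3, h4⟩ := h.cons
  refine ⟨fun i => ?_, fun i => ?_, fun i => ?_, ?_⟩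
  · cases i with
    | zero => exact le_rfl
    | succ i => exact h1 i
  · cases i with
    | zero => exact h.2.2.2
    | succ i => exact h2 i
  · rw [show k + 2 + i = (k + 1 + i) + 1 by ring]; exact h3 i
  · simp [consSeq]

/-- A configuration with a particle at the top site, with that particle removed. -/
lemma IsConfig.uncons {m k : ℕ} {x : ℕ → ℤ} (h : IsConfig (m + 1) (k + 1) x) (hx : ¬ x 0 < m) :
    x 0 = m ∧ IsConfig (m + 1) k (fun i => x (i + 1)) := by
  obtain ⟨h1, h2, h3, h4⟩ := h
  push_cast at h4
  refine ⟨by omega, fun i => h1 _, fun i => h2 _, fun i => ?_, ?_⟩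
  · rw [← h3 i, show k + 1 + i = k + i + 1 by ring]
  · have : x 1 ≤ x 0 := h1 0
    change x 1 < _
    push_cast
    omega

lemma isConfig_succ_one (m : ℕ) (x : ℕ → ℤ) :
    IsConfig (m + 1) 1 x ↔ IsConfig m 1 x ∨ ∃ y, IsConfig m 0 y ∧ consSeq m y = x := by
  constructor
  · intro h
    by_cases hx : x 0 < m
    · exact Or.inl ⟨h.1, h.2.1, h.2.2.1, hx⟩
    · obtain ⟨h0, h'⟩ := IsConfig.uncons (k := 0) h hx
      refine Or.inr ⟨_, (isConfig_zero_right _ _).2 ((isConfig_zero_right _ _).1 h'), ?_⟩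
      rw [← h0, ← eq_consSeq]
  · rintro (h | ⟨y, h, rfl⟩)
    · exact h.mono
    · exact h.cons

lemma isConfig_succ_add_two (m k : ℕ) (x : ℕ → ℤ) :
    IsConfig (m + 1) (k + 2) x ↔ IsConfig m (k + 2) x ∨
      (∃ y, IsConfig m (k + 1) y ∧ consSeq m y = x) ∨
      ∃ y, IsConfig m k y ∧ consSeq m (consSeq m y) = x := by
  constructor
  · intro h
    by_cases hx : x 0 < m
    · exact Or.inl ⟨h.1, h.2.1, h.2.2.1, hx⟩
    obtain ⟨h0, h'⟩ := IsConfig.uncons (k := k + 1) h hx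
    refine Or.inr ?_
    by_cases hx' : x 1 < m
    · refine Or.inl ⟨_, ⟨h'.1, h'.2.1, h'.2.2.1, hx'⟩, ?_⟩
      rw [← h0, ← eq_consSeq]
    · obtain ⟨h0', h''⟩ := IsConfig.uncons h' hx'
      have h2 : x 2 < m := h0 ▸ h.2.1 0
      refine Or.inr ⟨_, ⟨h''.1, h''.2.1, h''.2.2.1, h2⟩, ?_⟩
      funext i
      match i with
      | 0 => exact h0.symm
      | 1 => exact h0'.symm
      | i + 2 => rfl
  · rintro (h | ⟨y, h, rfl⟩ | ⟨y, h, rfl⟩)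
    · exact h.mono
    · exact h.cons
    · exact h.cons_cons

/-- Configurations with `k` particles in a box of `m` sites, weighted by `q` to the sum of the
positions in the box, are enumerated by `coef q m k`. -/
lemma exists_finset_config {q : ℝ} (hq : 0 < q) (m k : ℕ) :
    ∃ T : Finset (ℕ → ℤ), (∀ x, x ∈ T ↔ IsConfig m k x) ∧
      ∑ x ∈ T, q ^ (∑ i ∈ range k, x i) = coef q m k := by
  classical
  induction m generalizing k with
  | zero =>
    cases k with
    | zero => exact ⟨{tail}, fun x => by rw [isConfig_zero_right, mem_singleton], by simp [coef]⟩
    | succ k =>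
      refine ⟨∅, fun x => by simp [not_isConfig_zero], ?_⟩
      rw [coef, if_neg (by positivity), sum_empty]
  | succ m ih =>
    match k with
    | 0 =>
      refine ⟨{tail}, fun x => by rw [isConfig_zero_right, mem_singleton], ?_⟩
      obtain ⟨T, hT, hs⟩ := ih 0
      have : T = {tail} := by ext x; rw [hT, isConfig_zero_right, mem_singleton]
      rw [this] at hs
      rw [coef_succ, coef_neg q m (k := (0 : ℕ) - 1) (by simp),
        coef_neg q m (k := (0 : ℕ) - 2) (by simp), mul_zero, mul_zero, add_zero, add_zero, ← hs]
    | 1 =>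
      obtain ⟨T1, hT1, hs1⟩ := ih 1
      obtain ⟨T0, hT0, hs0⟩ := ih 0
      refine ⟨T1 ∪ T0.image (consSeq m), fun x => ?_, ?_⟩
      · simp only [mem_union, mem_image, hT1, hT0, isConfig_succ_one]
      · have hd : Disjoint T1 (T0.image (consSeq m)) := by
          rw [disjoint_left]
          intro x hx hx'
          obtain ⟨y, -, rfl⟩ := mem_image.1 hx'
          exact lt_irrefl _ ((hT1 _).1 hx).2.2.2
        rw [sum_union hd, sum_image (consSeq_injective _).injOn, coef_succ, hs1,
          coef_neg q m (k := (1 : ℕ) - 2) (by simp), mul_zero, add_zero]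
        congr 1
        rw [show ((1 : ℕ) : ℤ) - 1 = (0 : ℕ) by simp, ← hs0, mul_sum]
        refine sum_congr rfl fun x _ => ?_
        simp [consSeq]
    | k + 2 =>
      obtain ⟨T2, hT2, hs2⟩ := ih (k + 2)
      obtain ⟨T1, hT1, hs1⟩ := ih (k + 1)
      obtain ⟨T0, hT0, hs0⟩ := ih k
      have hinj : Function.Injective fun y => consSeq m (consSeq m y) :=
        (consSeq_injective m).comp (consSeq_injective m)
      refine ⟨T2 ∪ (T1.image (consSeq m) ∪ T0.image fun y => consSeq m (consSeq m y)),
        fun x => ?_, ?_⟩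
      · simp only [mem_union, mem_image, hT2, hT1, hT0, isConfig_succ_add_two]
      · have hd : Disjoint T2
            (T1.image (consSeq m) ∪ T0.image fun y => consSeq m (consSeq m y)) := by
          rw [disjoint_left]
          intro x hx hx'
          have hlt := ((hT2 _).1 hx).2.2.2
          rcases mem_union.1 hx' with h | h <;> obtain ⟨y, -, rfl⟩ := mem_image.1 h <;>
            exact lt_irrefl _ hlt
        have hd' : Disjoint (T1.image (consSeq m))
            (T0.image fun y => consSeq m (consSeq m y)) := by
          rw [disjoint_left]
          intro x hx hx'
          obtain ⟨y, hy, rfl⟩ := mem_image.1 hx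
          obtain ⟨w, -, hw⟩ := mem_image.1 hx'
          have := consSeq_injective _ hw
          subst this
          exact lt_irrefl _ ((hT1 _).1 hy).2.2.2
        rw [sum_union hd, sum_union hd', sum_image (consSeq_injective _).injOn,
          sum_image hinj.injOn, coef_succ, hs2, add_assoc]
        congr 2
        · rw [show ((k + 2 : ℕ) : ℤ) - 1 = (k + 1 : ℕ) by push_cast; ring, ← hs1, mul_sum]
          refine sum_congr rfl fun x _ => ?_
          rw [sum_range_succ', zpow_add₀ hq.ne', mul_comm]
          simp [consSeq]
        · rw [show ((k + 2 : ℕ) : ℤ) - 2 = k by push_cast; ring, ← hs0, mul_sum]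
          refine sum_congr rfl fun x _ => ?_
          rw [sum_range_succ', sum_range_succ', zpow_add₀ hq.ne', zpow_add₀ hq.ne', two_mul,
            pow_add]
          simp only [consSeq, zpow_natCast]
          ring

/-! ### Gap sequences and `Sodd` -/

/-- The gaps between consecutive particles of a configuration. -/
def gaps (x : ℕ → ℤ) (i : ℕ) : ℕ := (x i - x (i + 1)).toNat

lemma IsConfig.coe_gaps {m k : ℕ} {x : ℕ → ℤ} (h : IsConfig m k x) (i : ℕ) :
    (gaps x i : ℤ) = x i - x (i + 1) :=
  Int.toNat_of_nonneg (sub_nonneg.2 (h.1 i))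

lemma IsConfig.gaps_eq {m p : ℕ} {x : ℕ → ℤ} (h : IsConfig m (2 * p + 1) x) (n : ℕ)
    (hn : n ≥ 2 * p + 1) : gaps x n = if (n + 1) % 2 = 1 then 1 else 0 := by
  obtain ⟨i, rfl⟩ := Nat.exists_eq_add_of_le hn
  have h0 := h.coe_gaps (2 * p + 1 + i)
  rw [h.2.2.1 i, add_assoc (2 * p + 1) i 1, h.2.2.1 (i + 1)] at h0
  simp only [tail] at h0
  split_ifs <;> omega

/-- The bound of two particles per site says exactly that no two consecutive gaps vanish. -/
lemma IsConfig.gaps_mem {m p : ℕ} {x : ℕ → ℤ} (h : IsConfig m (2 * p + 1) x) : gaps x ∈ Ho := by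
  refine ⟨fun n hn => ?_, 2 * p + 1, h.gaps_eq⟩
  have h0 := h.coe_gaps n
  have h1 := h.coe_gaps (n + 1)
  have h2 := h.2.1 n
  rw [hn.1] at h0
  rw [hn.2] at h1
  rw [add_assoc] at h1
  norm_num at h0 h1
  omega

lemma IsConfig.eq_of_gaps_eq {m k : ℕ} {x y : ℕ → ℤ} (hx : IsConfig m k x) (hy : IsConfig m k y)
    (h : gaps x = gaps y) : x = y := by
  have hk : ∀ i, k ≤ i → x i = y i := fun i hi => by
    obtain ⟨j, rfl⟩ := Nat.exists_eq_add_of_le hi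
    rw [hx.2.2.1, hy.2.2.1]
  have hj : ∀ j i, k ≤ i + j → x i = y i := by
    intro j
    induction j with
    | zero => exact fun i hi => hk i hi
    | succ j ih =>
      intro i hi
      have h1 := ih (i + 1) (by omega)
      have h2 := hx.coe_gaps i
      have h3 := hy.coe_gaps i
      rw [h] at h2
      linarith
  exact funext fun i => hj k i (by omega)

lemma sum_gaps_mul (x : ℕ → ℤ) (k : ℕ) :
    ∑ n ∈ range k, ((n : ℤ) + 1) * (x n - x (n + 1)) = ∑ i ∈ range k, x i - k * x k := by
  induction k with
  | zero => simp
  | succ k ih =>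
    rw [sum_range_succ, sum_range_succ, ih]
    push_cast
    ring

lemma sum_ground (p : ℕ) :
    ∑ n ∈ range (2 * p + 1), (if (n + 1) % 2 = 0 then (0 : ℤ) else (n : ℤ) + 1) =
      ((p : ℤ) + 1) ^ 2 := by
  induction p with
  | zero => simp
  | succ p ih =>
    rw [show 2 * (p + 1) + 1 = 2 * p + 1 + 1 + 1 by ring, sum_range_succ, sum_range_succ, ih,
      if_pos (by omega), if_neg (by omega)]
    push_cast
    ring

/-- Abel summation turns the weight `A'` of the gap sequence into the sum of the positions,
normalised by its minimum. -/
lemma IsConfig.A'fun_gaps {m p : ℕ} {x : ℕ → ℤ} (h : IsConfig m (2 * p + 1) x) :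
    A'fun (gaps x) = ∑ i ∈ range (2 * p + 1), x i - (p : ℤ) ^ 2 := by
  rw [A'fun, finsum_eq_sum_of_support_subset (s := range (2 * p + 1))]
  · have e : ∀ n ∈ range (2 * p + 1),
        (if (n + 1) % 2 = 0 then ((n : ℤ) + 1) * (gaps x n : ℤ)
          else ((n : ℤ) + 1) * ((gaps x n : ℤ) - 1)) =
        ((n : ℤ) + 1) * (x n - x (n + 1)) -
          (if (n + 1) % 2 = 0 then (0 : ℤ) else (n : ℤ) + 1) := by
      intro n _
      rw [h.coe_gaps]
      split_ifs <;> ring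
    rw [sum_congr rfl e, sum_sub_distrib, sum_gaps_mul, sum_ground]
    have h0 := h.2.2.1 0
    simp only [add_zero, tail] at h0
    rw [h0]
    push_cast
    ring
  · intro n hn
    by_contra hlt
    refine hn ?_
    simp only [coe_range, Set.mem_Iio, not_lt] at hlt
    have := h.gaps_eq n hlt
    by_cases h2 : (n + 1) % 2 = 0
    · rw [if_neg (by omega)] at this
      simp [this, h2]
    · rw [if_pos (by omega)] at this
      simp [this, h2]

/-- Every element of `Ho` is the gap sequence of a configuration in each sufficiently large box. -/
lemma eventually_exists_config {ω : ℕ → ℕ} (hω : ω ∈ Ho) :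
    ∀ᶠ p : ℕ in atTop, ∃ x, IsConfig (2 * p + 2) (2 * p + 1) x ∧ gaps x = ω := by
  obtain ⟨h0, N, hN⟩ := hω
  have hsum : ∀ p, N ≤ p →
      ∑ j ∈ range (2 * p + 1), ω j ≤ ∑ j ∈ range (2 * N + 1), ω j + p := by
    intro p hp
    induction p, hp using Nat.le_induction with
    | base => omega
    | succ p hp ih =>
      rw [show 2 * (p + 1) + 1 = 2 * p + 1 + 1 + 1 by ring, sum_range_succ, sum_range_succ,
        hN (2 * p + 1) (by omega), hN (2 * p + 1 + 1) (by omega), if_neg (by omega),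
        if_pos (by omega)]
      omega
  filter_upwards [eventually_ge_atTop N, eventually_ge_atTop (∑ j ∈ range (2 * N + 1), ω j)]
    with p hp1 hp2
  -- In the box, positions are recovered by adding up the gaps from the bottom. The truncated
  -- subtraction makes the first summand `tail 0` there.
  let x : ℕ → ℤ := fun i => tail (i - (2 * p + 1)) + ∑ j ∈ Ico i (2 * p + 1), (ω j : ℤ)
  have hdiff : ∀ i, x i - x (i + 1) = ω i := by
    intro i
    simp only [x]
    by_cases hi : i < 2 * p + 1
    · rw [sum_eq_sum_Ico_succ_bot hi, Nat.sub_eq_zero_of_le hi.le,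
        Nat.sub_eq_zero_of_le (show i + 1 ≤ 2 * p + 1 from hi)]
      ring
    · rw [Ico_eq_empty (by omega), Ico_eq_empty (by omega), hN i (by omega)]
      simp only [tail, sum_empty]
      split_ifs <;> omega
  refine ⟨x, ⟨fun i => ?_, fun i => ?_, fun i => ?_, ?_⟩, ?_⟩
  · have := hdiff i
    omega
  · have h1 := hdiff i
    have h2 := hdiff (i + 1)
    have h3 := h0 i
    rw [add_assoc] at h2
    norm_num at h2
    omega
  · simp [x]
  · have := hsum p hp1
    simp only [x, Nat.zero_sub, tail, Nat.Ico_zero_eq_range]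
    push_cast
    have h4 : (∑ j ∈ range (2 * p + 1), (ω j : ℤ)) = ((∑ j ∈ range (2 * p + 1), ω j : ℕ) : ℤ) := by
      push_cast; rfl
    rw [h4]
    omega
  · funext i
    simp [gaps, hdiff i]

lemma hasSum_of_tendsto_finset {ι : Type*} {f : ι → ℝ} (hf : 0 ≤ f) {s : ℕ → Finset ι} {c : ℝ}
    (hs : ∀ i, ∀ᶠ p in atTop, i ∈ s p)
    (hc : Tendsto (fun p => ∑ i ∈ s p, f i) atTop (𝓝 c)) : HasSum f c := by
  have hu : ∀ u : Finset ι, ∀ᶠ p in atTop, u ≤ s p := fun u =>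
    (eventually_all_finset u).2 fun i _ => hs i
  have hsm : Summable f := summable_of_sum_le hf fun u => ge_of_tendsto hc <| by
    filter_upwards [hu u] with p hp
    exact sum_le_sum_of_subset_of_nonneg hp fun i _ _ => hf i
  have h := hsm.hasSum.comp (tendsto_atTop.2 hu)
  rw [tendsto_nhds_unique hc h]
  exact hsm.hasSum

lemma Sodd_eq {q : ℝ} (hq : 0 < q) (hq1 : q < 1) : Sodd q 1 = limCoef q (-1) := by
  classical
  choose T hT hs using fun p : ℕ => exists_finset_config hq (2 * p + 2) (2 * p + 1)
  refine HasSum.tsum_eq (hasSum_of_tendsto_finset (s := fun p => ((T p).image gaps).subtype (· ∈ Ho))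
    (fun ω => ?_) (fun ω => ?_) ?_)
  · exact mul_nonneg (zpow_pos hq _).le (zpow_pos one_pos _).le
  · filter_upwards [eventually_exists_config ω.2] with p hp
    obtain ⟨x, hx, hxω⟩ := hp
    exact mem_subtype.2 (mem_image.2 ⟨x, (hT p x).2 hx, hxω⟩)
  · refine (tendsto_laurent hq hq1 (-1)).congr fun p => ?_
    rw [sum_subtype_of_mem (fun ω => q ^ A'fun ω * 1 ^ B'fun ω), sum_image]
    · rw [laurent, show (-1 : ℤ) + 2 * p + 2 = (2 * p + 1 : ℕ) by push_cast; ring, ← hs p, mul_sum]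
      refine sum_congr rfl fun x hx => ?_
      rw [((hT p x).1 hx).A'fun_gaps, one_zpow, mul_one, ← zpow_add₀ hq.ne']
      congr 1
      ring
    · exact fun x hx y hy h => ((hT p x).1 hx).eq_of_gaps_eq ((hT p y).1 hy) h
    · intro ω hω
      obtain ⟨x, hx, rfl⟩ := mem_image.1 hω
      exact ((hT p x).1 hx).gaps_mem

end TrinomialTheta

open TrinomialTheta in
theorem statement12 (q z : ℝ) (hq0 : 0 < q) (hq1 : q < 1) (hz : 0 < z) :
    Summable (fun ℓ : ℤ => q ^ ((ℓ + 1) ^ 2) * z ^ (2 * ℓ + 1)) ∧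
    Multipliable (fun i : ℕ =>
      (1 + q ^ (i + 1) * z + q ^ (2 * (i + 1)) * z ^ 2) *
      (1 + q ^ i * z⁻¹ + q ^ (2 * i) * z⁻¹ ^ 2)) ∧
    Multipliable (fun i : ℕ =>
      (1 - q ^ (i + 1) * z + q ^ (2 * (i + 1)) * z ^ 2) *
      (1 - q ^ i * z⁻¹ + q ^ (2 * i) * z⁻¹ ^ 2)) ∧
    2 * Sodd q 1 * (∑' ℓ : ℤ, q ^ ((ℓ + 1) ^ 2) * z ^ (2 * ℓ + 1)) =
      (∏' i : ℕ, (1 + q ^ (i + 1) * z + q ^ (2 * (i + 1)) * z ^ 2) *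
        (1 + q ^ i * z⁻¹ + q ^ (2 * i) * z⁻¹ ^ 2)) -
      (∏' i : ℕ, (1 - q ^ (i + 1) * z + q ^ (2 * (i + 1)) * z ^ 2) *
        (1 - q ^ i * z⁻¹ + q ^ (2 * i) * z⁻¹ ^ 2)) := by
  -- Both products are values of the same two-sided product, at `z` and at `-z`.
  have hpos : ∀ i : ℕ, (1 + q ^ (i + 1) * z + q ^ (2 * (i + 1)) * z ^ 2) *
      (1 + q ^ i * z⁻¹ + q ^ (2 * i) * z⁻¹ ^ 2) =
      siteFactor (q ^ (i + 1) * z) * siteFactor (q ^ i * z⁻¹) := fun i => by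
    simp only [siteFactor]; ring
  have hneg : ∀ i : ℕ, (1 - q ^ (i + 1) * z + q ^ (2 * (i + 1)) * z ^ 2) *
      (1 - q ^ i * z⁻¹ + q ^ (2 * i) * z⁻¹ ^ 2) =
      siteFactor (q ^ (i + 1) * (-z)) * siteFactor (q ^ i * (-z)⁻¹) := fun i => by
    simp only [siteFactor, inv_neg]; ring
  simp only [hpos, hneg]
  have hinj : Function.Injective fun l : ℤ => 2 * l + 1 := fun a b h => by
    simp only at h; omega
  have hc := limCoef_neg_one_pos hq0 hq1
  have hsum : Summable (fun ℓ : ℤ => q ^ ((ℓ + 1) ^ 2) * z ^ (2 * ℓ + 1)) := by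
    refine (((summable_limCoef hq0 hq1 hz).comp_injective hinj).mul_left
      (limCoef q (-1))⁻¹).congr fun l => ?_
    simp only [Function.comp, limCoef_odd hq0 hq1 l]
    field_simp
  refine ⟨hsum, multipliable_two_sided hq0 hq1 z, multipliable_two_sided hq0 hq1 (-z), ?_⟩
  have h := (hasSum_limCoef hq0 hq1 hz.ne').sub (hasSum_limCoef hq0 hq1 (neg_ne_zero.2 hz.ne'))
  rw [← h.tsum_eq, Sodd_eq hq0 hq1, ← tsum_mul_left,
    ← hinj.tsum_eq (f := fun k => limCoef q k * z ^ k - limCoef q k * (-z) ^ k)]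
  · refine tsum_congr fun l => ?_
    rw [(odd_two_mul_add_one l).neg_zpow, limCoef_odd hq0 hq1]
    ring
  · -- The even coefficients cancel in the difference.
    intro k hk
    rcases Int.even_or_odd' k with ⟨l, rfl | rfl⟩
    · exact absurd (by simp [(even_two_mul l).neg_zpow]) hk
    · exact ⟨l, rfl⟩
end

section
/- Fix real numbers q̃, t, c with 0 < q̃ < 1 and t ≥ 1. For each i ∈ ℤ let μᵢ be the probability measure on {0,1,2} given by μᵢ(z) = t^{1{z=1}}·q̃^{−(i−c)z}/Zᵢ where Zᵢ = 1 + t·q̃^{−(i−c)} + q̃^{−2(i−c)}, and let μ be the product probability measure ⊗_{i∈ℤ} μᵢ on {0,1,2}^ℤ. Then μ-almost every configuration η satisfies ηᵢ = 0 for all but finitely many i ≤ 0 and ηᵢ = 2 for all but finitely many i ≥ 1, so that N(η) = Σ_{i≥1}(2 − ηᵢ) − Σ_{i≤0} ηᵢ is a well-defined integer almost surely, and μ({η : ηᵢ = 0 for all but finitely many i ≤ 0, ηᵢ = 2 for all but finitely many i ≥ 1, and N(η) is odd}) = (1 − Π_{i∈ℤ}(1 − 2μᵢ(1)))/2, where the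 infinite product over i ∈ ℤ converges absolutely. -/
/-!
Off the ground state (`0` on `i ≤ 0`, `2` on `i ≥ 1`) the site `i` has weight `O(q ^ |i|)`
(`deviationWeight_le`). Hence Borel–Cantelli shows that almost every configuration is good, and
`∑ μᵢ(1)` converges, so the product `∏ (1 - 2 μᵢ(1))` converges absolutely.

For a good configuration the parity of `N(η)` is that of the number of sites with `ηᵢ = 1`, so the
finite products `∏_{i ∈ s} (-1)^{1{ηᵢ = 1}}` are eventually equal to `(-1)^{N(η)}` as `s` increases
to `ℤ` (`eventually_prod_siteSign`). By independence these products have mean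
`∏_{i ∈ s} (1 - 2 μᵢ(1))` (`integral_prod_siteSign`). Dominated convergence then gives
`𝔼 (-1)^N = ∏_{i ∈ ℤ} (1 - 2 μᵢ(1))`, and the left side equals `1 - 2 ℙ(N odd)`.
-/

open MeasureTheory
open scoped BigOperators ENNReal

/-- The normalising factor `Zᵢ = 1 + t·q̃^{−(i−c)} + q̃^{−2(i−c)}`. -/
noncomputable def Zfac (q t c : ℝ) (i : ℤ) : ℝ :=
  1 + t * Real.rpow q (-((i : ℝ) - c)) + Real.rpow q (-2 * ((i : ℝ) - c))

/-- The single-site weight `μᵢ(z) = t^{1{z=1}}·q̃^{−(i−c)·z} / Zᵢ` for `z ∈ {0,1,2}`. -/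
noncomputable def siteWeight (q t c : ℝ) (i : ℤ) (z : Fin 3) : ℝ :=
  t ^ (if (z : ℕ) = 1 then 1 else 0) * Real.rpow q (-((i : ℝ) - c) * (z : ℕ)) / Zfac q t c i

/-- The single-site measure `μᵢ` on `{0,1,2}`, given by the weights `siteWeight`. -/
noncomputable def siteMeasure (q t c : ℝ) (i : ℤ) : Measure (Fin 3) :=
  ∑ z : Fin 3, ENNReal.ofReal (siteWeight q t c i z) • Measure.dirac z

/-- A configuration `η` is good if `ηᵢ = 0` for all but finitely many `i ≤ 0` and `ηᵢ = 2`
for all but finitely many `i ≥ 1`. -/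
def GoodCfg (η : ℤ → Fin 3) : Prop :=
  {i : ℤ | i ≤ 0 ∧ η i ≠ 0}.Finite ∧ {i : ℤ | 1 ≤ i ∧ η i ≠ 2}.Finite

/-- The conserved quantity `N(η) = Σ_{i≥1} (2 − ηᵢ) − Σ_{i≤0} ηᵢ` (a well-defined integer
for good configurations). -/
noncomputable def Ncons (η : ℤ → Fin 3) : ℤ :=
  (∑ᶠ i : ℤ, if 1 ≤ i then 2 - ((η i : ℕ) : ℤ) else 0) -
  (∑ᶠ i : ℤ, if i ≤ 0 then ((η i : ℕ) : ℤ) else 0)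

/-! ### Single-site weights and their decay -/

/-- The two-valued sign `(-1)^{1{z = 1}}`, which equals `(-1)^z` on `{0,1,2}`. -/
noncomputable def siteSign (z : Fin 3) : ℝ := if z = 1 then -1 else 1

/-- The probability that site `i` differs from its ground state, which is `0` for `i ≤ 0` and `2`
for `i ≥ 1`. -/
noncomputable def deviationWeight (q t c : ℝ) (i : ℤ) : ℝ :=
  if i ≤ 0 then siteWeight q t c i 1 + siteWeight q t c i 2
  else siteWeight q t c i 0 + siteWeight q t c i 1

lemma Zfac_eq {q : ℝ} (t c : ℝ) (hq0 : 0 < q) (i : ℤ) :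
    Zfac q t c i = 1 + t * q ^ (-((i : ℝ) - c)) + (q ^ (-((i : ℝ) - c))) ^ 2 := by
  have h : q ^ (-2 * ((i : ℝ) - c)) = (q ^ (-((i : ℝ) - c))) ^ 2 := by
    rw [← Real.rpow_natCast, ← Real.rpow_mul hq0.le]
    congr 1
    push_cast
    ring
  simp only [Zfac, Real.rpow_eq_pow, h]

lemma siteWeight_zero (q t c : ℝ) (i : ℤ) : siteWeight q t c i 0 = 1 / Zfac q t c i := by
  simp [siteWeight]

lemma siteWeight_one (q t c : ℝ) (i : ℤ) :
    siteWeight q t c i 1 = t * q ^ (-((i : ℝ) - c)) / Zfac q t c i := by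
  simp [siteWeight]

lemma siteWeight_two {q : ℝ} (t c : ℝ) (hq0 : 0 < q) (i : ℤ) :
    siteWeight q t c i 2 = (q ^ (-((i : ℝ) - c))) ^ 2 / Zfac q t c i := by
  have h : q ^ (-((i : ℝ) - c) * 2) = (q ^ (-((i : ℝ) - c))) ^ 2 := by
    rw [← Real.rpow_natCast, ← Real.rpow_mul hq0.le]
    norm_num
  rw [← h]
  simp [siteWeight]

lemma Zfac_pos {q t : ℝ} (c : ℝ) (hq0 : 0 < q) (ht : 1 ≤ t) (i : ℤ) : 0 < Zfac q t c i := by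
  rw [Zfac_eq t c hq0]
  have := Real.rpow_pos_of_pos hq0 (-((i : ℝ) - c))
  positivity

lemma siteWeight_nonneg {q t : ℝ} (c : ℝ) (hq0 : 0 < q) (ht : 1 ≤ t) (i : ℤ) (z : Fin 3) :
    0 ≤ siteWeight q t c i z := by
  have h1 := (Zfac_pos c hq0 ht i).le
  have h2 := (Real.rpow_pos_of_pos hq0 (-((i : ℝ) - c) * (z : ℕ))).le
  unfold siteWeight
  rw [Real.rpow_eq_pow]
  positivity

lemma siteWeight_sum {q t : ℝ} (c : ℝ) (hq0 : 0 < q) (ht : 1 ≤ t) (i : ℤ) :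
    siteWeight q t c i 0 + siteWeight q t c i 1 + siteWeight q t c i 2 = 1 := by
  rw [siteWeight_zero, siteWeight_one, siteWeight_two t c hq0, ← add_div, ← add_div,
    ← Zfac_eq t c hq0]
  exact div_self (Zfac_pos c hq0 ht i).ne'

lemma siteWeight_one_le_deviationWeight {q t : ℝ} (c : ℝ) (hq0 : 0 < q) (ht : 1 ≤ t) (i : ℤ) :
    siteWeight q t c i 1 ≤ deviationWeight q t c i := by
  have h0 := siteWeight_nonneg c hq0 ht i 0
  have h2 := siteWeight_nonneg c hq0 ht i 2
  unfold deviationWeight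
  split_ifs <;> linarith

lemma deviationWeight_nonneg {q t : ℝ} (c : ℝ) (hq0 : 0 < q) (ht : 1 ≤ t) (i : ℤ) :
    0 ≤ deviationWeight q t c i :=
  (siteWeight_nonneg c hq0 ht i 1).trans (siteWeight_one_le_deviationWeight c hq0 ht i)

/-- With `x = q^{-(i-c)}`, the deviation probability is at most `t x + x²` for `i ≤ 0`, where
`x = q^c q^{|i|}`, and at most `t x⁻¹ + x⁻²` for `i ≥ 1`, where `x⁻¹ = q^{-c} q^{|i|}`. -/
lemma deviationWeight_le {q t : ℝ} (c : ℝ) (hq0 : 0 < q) (hq1 : q < 1) (ht : 1 ≤ t) (i : ℤ) :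
    deviationWeight q t c i ≤
      (t * q ^ c + (q ^ c) ^ 2 + (t * q ^ (-c) + (q ^ (-c)) ^ 2)) * q ^ i.natAbs := by
  have hA : 0 < q ^ c := Real.rpow_pos_of_pos hq0 _
  have hB : 0 < q ^ (-c) := Real.rpow_pos_of_pos hq0 _
  have hx : 0 < q ^ (-((i : ℝ) - c)) := Real.rpow_pos_of_pos hq0 _
  have hn : 0 < q ^ i.natAbs := pow_pos hq0 _
  have hn1 : q ^ i.natAbs ≤ 1 := pow_le_one₀ hq0.le hq1.le
  have hZ := Zfac_pos c hq0 ht i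
  have hsq : ∀ a : ℝ, 0 < a →
      t * (a * q ^ i.natAbs) + (a * q ^ i.natAbs) ^ 2 ≤ (t * a + a ^ 2) * q ^ i.natAbs := by
    intro a ha
    have : q ^ i.natAbs * q ^ i.natAbs ≤ q ^ i.natAbs * 1 := by gcongr
    nlinarith [mul_le_mul_of_nonneg_left this (sq_nonneg a)]
  unfold deviationWeight
  split_ifs with hi
  · have hxe : q ^ (-((i : ℝ) - c)) = q ^ c * q ^ i.natAbs := by
      rw [← Real.rpow_natCast, ← Real.rpow_add hq0]
      congr 1
      have : (i.natAbs : ℝ) = -(i : ℝ) := by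
        rw [Nat.cast_natAbs, abs_of_nonpos hi, Int.cast_neg]
      rw [this]
      ring
    rw [siteWeight_one, siteWeight_two t c hq0, ← add_div]
    have hZ1 : 1 ≤ Zfac q t c i := by
      rw [Zfac_eq t c hq0]
      nlinarith [mul_pos (lt_of_lt_of_le one_pos ht) hx, sq_nonneg (q ^ (-((i : ℝ) - c)))]
    refine (div_le_self (by positivity) hZ1).trans ?_
    rw [hxe]
    refine (hsq _ hA).trans ?_
    have : 0 ≤ t * q ^ (-c) + (q ^ (-c)) ^ 2 := by positivity
    exact mul_le_mul_of_nonneg_right (by linarith) hn.le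
  · have hxe : q ^ (-((i : ℝ) - c)) * (q ^ (-c) * q ^ i.natAbs) = 1 := by
      rw [← Real.rpow_natCast, ← Real.rpow_add hq0, ← Real.rpow_add hq0]
      have : (i.natAbs : ℝ) = (i : ℝ) := by
        rw [Nat.cast_natAbs, abs_of_pos (not_le.mp hi)]
      rw [this]
      convert Real.rpow_zero q using 2
      ring
    rw [siteWeight_zero, siteWeight_one, ← add_div]
    have hb := hsq _ hB
    set y := q ^ (-c) * q ^ i.natAbs with hy
    have hypos : 0 < y := by positivity
    set x := q ^ (-((i : ℝ) - c)) with hxdef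
    have h1 : (1 + t * x) / Zfac q t c i ≤ t * y + y ^ 2 := by
      rw [div_le_iff₀ hZ, Zfac_eq t c hq0, ← hxdef]
      have e1 : (t * y + y ^ 2) * (1 + t * x + x ^ 2)
          = t * y + y ^ 2 + t * (t * (x * y)) + t * y * (x * y) + t * (x * y) * x
            + (x * y) ^ 2 := by ring
      rw [e1, hxe]
      have : 0 ≤ t * y + y ^ 2 + t * (t * 1) + t * y * 1 := by positivity
      linarith
    refine h1.trans (hb.trans ?_)
    have : 0 ≤ t * q ^ c + (q ^ c) ^ 2 := by positivity
    exact mul_le_mul_of_nonneg_right (by linarith) hn.le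

lemma summable_deviationWeight {q t : ℝ} (c : ℝ) (hq0 : 0 < q) (hq1 : q < 1) (ht : 1 ≤ t) :
    Summable (deviationWeight q t c) := by
  refine Summable.of_nonneg_of_le (deviationWeight_nonneg c hq0 ht)
    (deviationWeight_le c hq0 hq1 ht) (Summable.mul_left _ ?_)
  have := summable_geometric_of_lt_one hq0.le hq1
  exact Summable.of_nat_of_neg (by simpa using this) (by simpa using this)

/-! ### Single-site measures and finite marginals -/

lemma siteMeasure_apply (q t c : ℝ) (i : ℤ) (A : Set (Fin 3)) :
    siteMeasure q t c i A =
      ∑ z : Fin 3, ENNReal.ofReal (siteWeight q t c i z) * A.indicator 1 z := by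
  simp [siteMeasure, Measure.dirac_apply' _ (MeasurableSet.of_discrete (s := A))]

lemma siteMeasure_isProbabilityMeasure {q t : ℝ} (c : ℝ) (hq0 : 0 < q) (ht : 1 ≤ t) (i : ℤ) :
    IsProbabilityMeasure (siteMeasure q t c i) := by
  have h := siteWeight_nonneg c hq0 ht i
  constructor
  rw [siteMeasure_apply]
  simp only [Set.indicator_univ, Pi.one_apply, mul_one, Fin.sum_univ_three]
  rw [← ENNReal.ofReal_add (h 0) (h 1), ← ENNReal.ofReal_add (add_nonneg (h 0) (h 1)) (h 2),
    siteWeight_sum c hq0 ht, ENNReal.ofReal_one]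

lemma integral_siteSign {q t : ℝ} (c : ℝ) (hq0 : 0 < q) (ht : 1 ≤ t) (i : ℤ) :
    ∫ z, siteSign z ∂(siteMeasure q t c i) = 1 - 2 * siteWeight q t c i 1 := by
  have h := siteWeight_nonneg c hq0 ht i
  have hs := siteWeight_sum c hq0 ht i
  have := siteMeasure_isProbabilityMeasure c hq0 ht i
  rw [integral_fintype .of_finite]
  simp only [Measure.real, siteMeasure_apply, Fin.sum_univ_three]
  simp [siteSign, ENNReal.toReal_ofReal, h]
  linarith

section Product

variable {q t c : ℝ} {μ : Measure (ℤ → Fin 3)}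

lemma map_eval_eq_siteMeasure (hq0 : 0 < q) (ht : 1 ≤ t)
    (hμ : ∀ s : Finset ℤ, Measure.map (fun η (i : s) => η (i : ℤ)) μ =
      Measure.pi fun i : s => siteMeasure q t c (i : ℤ)) (i : ℤ) :
    μ.map (fun η => η i) = siteMeasure q t c i := by
  have := fun j => siteMeasure_isProbabilityMeasure c hq0 ht j
  have h := (measurePreserving_eval (fun j : ({i} : Finset ℤ) => siteMeasure q t c (j : ℤ))
    ⟨i, by simp⟩).map_eq
  rw [← hμ {i}, Measure.map_map (by fun_prop) (by fun_prop)] at h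
  exact h

lemma integral_prod_siteSign (hq0 : 0 < q) (ht : 1 ≤ t)
    (hμ : ∀ s : Finset ℤ, Measure.map (fun η (i : s) => η (i : ℤ)) μ =
      Measure.pi fun i : s => siteMeasure q t c (i : ℤ)) (s : Finset ℤ) :
    ∫ η, ∏ i ∈ s, siteSign (η i) ∂μ = ∏ i ∈ s, (1 - 2 * siteWeight q t c i 1) := by
  have := fun j => siteMeasure_isProbabilityMeasure c hq0 ht j
  have h1 : ∫ η, ∏ i ∈ s, siteSign (η i) ∂μ =
      ∫ ω, ∏ i : s, siteSign (ω i) ∂(Measure.pi fun i : s => siteMeasure q t c (i : ℤ)) := by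
    rw [← hμ s, integral_map (Measurable.aemeasurable (by fun_prop)) (Measurable.of_discrete).aestronglyMeasurable]
    congr 1
    ext η
    exact (Finset.prod_coe_sort s (fun i => siteSign (η i))).symm
  rw [h1, integral_fintype_prod_eq_prod (f := fun (_ : s) z => siteSign z)]
  simp only [integral_siteSign c hq0 ht]
  exact Finset.prod_coe_sort s (fun i => 1 - 2 * siteWeight q t c i 1)

lemma ae_goodCfg (hq0 : 0 < q) (hq1 : q < 1) (ht : 1 ≤ t)
    (hμ : ∀ s : Finset ℤ, Measure.map (fun η (i : s) => η (i : ℤ)) μ =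
      Measure.pi fun i : s => siteMeasure q t c (i : ℤ)) :
    ∀ᵐ η ∂μ, GoodCfg η := by
  let A : ℤ → Set (Fin 3) := fun i => if i ≤ 0 then {0}ᶜ else {2}ᶜ
  have hA : ∀ i, μ {η | η i ∈ A i} = ENNReal.ofReal (deviationWeight q t c i) := by
    intro i
    have h := siteWeight_nonneg c hq0 ht i
    have h1 : μ {η | η i ∈ A i} = μ.map (fun η => η i) (A i) := by
      rw [Measure.map_apply (by fun_prop) MeasurableSet.of_discrete]
      rfl
    rw [h1, map_eval_eq_siteMeasure hq0 ht hμ, siteMeasure_apply, Fin.sum_univ_three]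
    by_cases hi : i ≤ 0
    · simp [A, hi, deviationWeight, ENNReal.ofReal_add, h]
    · simp [A, hi, deviationWeight, ENNReal.ofReal_add, h]
  have hsum : ∑' i, μ {η | η i ∈ A i} ≠ ⊤ := by
    simp only [hA]
    exact (summable_deviationWeight c hq0 hq1 ht).tsum_ofReal_ne_top
  filter_upwards [ae_finite_setOfPred_mem hsum] with η hη
  refine ⟨hη.subset ?_, hη.subset ?_⟩
  · rintro i ⟨hi, hne⟩
    simp [A, hi, hne]
  · rintro i ⟨hi, hne⟩
    have : ¬ i ≤ 0 := by omega
    simp [A, this, hne]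

end Product

/-! ### Parity of the conserved quantity -/

/-- The contribution of site `i` to `N(η)`. -/
def siteCharge (η : ℤ → Fin 3) (i : ℤ) : ℤ :=
  (if 1 ≤ i then 2 - ((η i : ℕ) : ℤ) else 0) - (if i ≤ 0 then ((η i : ℕ) : ℤ) else 0)

lemma siteSign_eq (η : ℤ → Fin 3) (i : ℤ) :
    siteSign (η i) = if Odd (siteCharge η i) then -1 else 1 := by
  unfold siteSign siteCharge
  rcases le_or_gt i 0 with hi | hi
  · rw [if_neg (show ¬ 1 ≤ i by omega), if_pos hi]
    generalize η i = z
    fin_cases z <;> simp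
  · rw [if_pos (show 1 ≤ i by omega), if_neg (show ¬ i ≤ 0 by omega)]
    generalize η i = z
    fin_cases z <;> simp

lemma prod_siteSign_eq (η : ℤ → Fin 3) (s : Finset ℤ) :
    ∏ i ∈ s, siteSign (η i) = if Odd (∑ i ∈ s, siteCharge η i) then -1 else 1 := by
  induction s using Finset.induction_on with
  | empty => simp
  | insert a s ha ih =>
    rw [Finset.prod_insert ha, Finset.sum_insert ha, ih, siteSign_eq]
    by_cases h1 : Odd (siteCharge η a) <;> by_cases h2 : Odd (∑ i ∈ s, siteCharge η i) <;>
      simp [Int.odd_add, ← Int.not_odd_iff_even, h1, h2]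

/-- Once `s` contains all sites off the ground state, the sum of site charges over `s` is `N(η)`. -/
lemma eventually_prod_siteSign {η : ℤ → Fin 3} (hη : GoodCfg η) :
    ∀ᶠ s : Finset ℤ in Filter.atTop,
      ∏ i ∈ s, siteSign (η i) = if Odd (Ncons η) then -1 else 1 := by
  filter_upwards [Filter.eventually_ge_atTop (hη.1.toFinset ∪ hη.2.toFinset)] with s hs
  have hN : Ncons η = ∑ i ∈ s, siteCharge η i := by
    simp only [Ncons, siteCharge, Finset.sum_sub_distrib]
    congr 1
    · refine finsum_eq_sum_of_support_subset _ fun i hi => hs ?_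
      simp only [Function.mem_support, ne_eq, ite_eq_right_iff, Classical.not_imp] at hi
      simp only [Finset.mem_union, Set.Finite.mem_toFinset, Set.mem_ofPred_eq]
      exact Or.inr ⟨hi.1, fun h => hi.2 (by simp [h])⟩
    · refine finsum_eq_sum_of_support_subset _ fun i hi => hs ?_
      simp only [Function.mem_support, ne_eq, ite_eq_right_iff, Classical.not_imp] at hi
      simp only [Finset.mem_union, Set.Finite.mem_toFinset, Set.mem_ofPred_eq]
      exact Or.inl ⟨hi.1, fun h => hi.2 (by simp [h])⟩
  rw [prod_siteSign_eq, hN]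

lemma norm_prod_siteSign (η : ℤ → Fin 3) (s : Finset ℤ) : ‖∏ i ∈ s, siteSign (η i)‖ = 1 := by
  rw [prod_siteSign_eq]
  split_ifs <;> simp

theorem statement19 (q t c : ℝ) (hq0 : 0 < q) (hq1 : q < 1) (ht : 1 ≤ t)
    (μ : Measure (ℤ → Fin 3)) [IsProbabilityMeasure μ]
    (hμ : ∀ s : Finset ℤ,
      Measure.map (fun η (i : s) => η (i : ℤ)) μ =
        Measure.pi fun i : s => siteMeasure q t c (i : ℤ)) :
    (∀ᵐ η ∂μ, GoodCfg η) ∧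
    Multipliable (fun i : ℤ => 1 - 2 * siteWeight q t c i 1) ∧
    μ {η | GoodCfg η ∧ Odd (Ncons η)} =
      ENNReal.ofReal ((1 - ∏' i : ℤ, (1 - 2 * siteWeight q t c i 1)) / 2) := by
  have hgood := ae_goodCfg hq0 hq1 ht hμ
  have hmult : Multipliable (fun i : ℤ => 1 - 2 * siteWeight q t c i 1) := by
    have hs : Summable fun i : ℤ => siteWeight q t c i 1 :=
      Summable.of_nonneg_of_le (fun i => siteWeight_nonneg c hq0 ht i 1)
        (siteWeight_one_le_deviationWeight c hq0 ht) (summable_deviationWeight c hq0 hq1 ht)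
    simpa [sub_eq_add_neg] using Real.multipliable_one_add_of_summable (hs.mul_left 2).neg
  refine ⟨hgood, hmult, ?_⟩
  set F : (ℤ → Fin 3) → ℝ := fun η => if Odd (Ncons η) then -1 else 1 with hF
  have hmeas : ∀ s : Finset ℤ,
      AEStronglyMeasurable (fun η : ℤ → Fin 3 => ∏ i ∈ s, siteSign (η i)) μ := fun s =>
    (Finset.measurable_prod s fun i _ =>
      (Measurable.of_discrete (f := siteSign)).comp (measurable_pi_apply i)).aestronglyMeasurable
  have hlim : ∀ᵐ η ∂μ, Filter.Tendsto (fun s : Finset ℤ => ∏ i ∈ s, siteSign (η i))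
      Filter.atTop (nhds (F η)) := by
    filter_upwards [hgood] with η hη
    exact tendsto_nhds_of_eventually_eq (eventually_prod_siteSign hη)
  have hFm : AEStronglyMeasurable F μ :=
    aestronglyMeasurable_of_tendsto_ae Filter.atTop hmeas hlim
  have hint : ∫ η, F η ∂μ = ∏' i : ℤ, (1 - 2 * siteWeight q t c i 1) := by
    have h1 := tendsto_integral_filter_of_dominated_convergence (fun _ => (1 : ℝ))
      (Filter.Eventually.of_forall hmeas)
      (Filter.Eventually.of_forall fun s =>
        Filter.Eventually.of_forall fun η => (norm_prod_siteSign η s).le)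
      (integrable_const _) hlim
    simp only [integral_prod_siteSign hq0 ht hμ] at h1
    exact tendsto_nhds_unique h1 hmult.hasProd
  set O : Set (ℤ → Fin 3) := {η | Odd (Ncons η)} with hO
  have hOm : NullMeasurableSet O μ := by
    have : O = F ⁻¹' {-1} := by
      ext η
      by_cases h : Odd (Ncons η) <;> simp [hO, hF, h]
      norm_num
    rw [this]
    exact hFm.aemeasurable.nullMeasurableSet_preimage (measurableSet_singleton _)
  have hFO : ∫ η, F η ∂μ = 1 - 2 * μ.real O := by
    have h2 : F = fun η => 1 - 2 * O.indicator (fun _ => (1 : ℝ)) η := by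
      ext η
      by_cases h : Odd (Ncons η) <;> simp [hO, hF, h]
      norm_num
    have hi : Integrable (O.indicator fun _ => (1 : ℝ)) μ :=
      (integrable_const (1 : ℝ)).indicator₀ hOm
    rw [h2, integral_sub (integrable_const _) (hi.const_mul 2), integral_const_mul,
      integral_indicator₀ hOm]
    simp
  have hset : μ {η | GoodCfg η ∧ Odd (Ncons η)} = μ O := by
    refine measure_congr ?_
    filter_upwards [hgood] with η hη
    exact propext ⟨fun h => h.2, fun h => ⟨hη, h⟩⟩
  rw [hset, ← hint, hFO, ← ENNReal.ofReal_toReal (measure_ne_top μ O)]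
  congr 1
  simp only [Measure.real]
  ring
end
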